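/- arXiv:2409.10557 — 4 statements merged into one kernel-verified Lean document; each statement's English description precedes it below -/
import Mathlib

section
/- For every commutative ring S there exists a faithfully flat S-algebra T with the following property: every faithfully flat T-algebra R that is countably presented admits a T-algebra homomorphism R → T (equivalently, the faithfully flat cover T → R splits as T-algebras). -/
universe u

open TensorProduct

/-- A commutative `A`-algebra `B` is faithfully flat if it is flat as an `A`-module and,
for every `A`-module `M`, the vanishing of `M ⊗[A] B` implies the vanishing of `M`. -/
def FaithfullyFlatAlgebra (A B : Type u) [CommRing A] [CommRing B] [Algebra A B] : Prop :=
  Module.Flat A B ∧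
    ∀ (M : Type u) [AddCommGroup M] [Module A M],
      Subsingleton (M ⊗[A] B) → Subsingleton M

/-- A commutative `T`-algebra `R` is countably presented if there is a surjective `T`-algebra
homomorphism from the polynomial algebra `T[X₀, X₁, …]` in countably many variables onto `R`
whose kernel is generated, as an ideal, by a countable set. -/
def CountablyPresentedAlgebra (T R : Type u) [CommRing T] [CommRing R] [Algebra T R] : Prop :=
  ∃ f : MvPolynomial ℕ T →ₐ[T] R, Function.Surjective f ∧
    ∃ s : Set (MvPolynomial ℕ T), s.Countable ∧ Ideal.span s = RingHom.ker f

/-!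
Fix a ring `A`. The coproduct of all faithfully flat `A`-algebras with generators indexed by `ι` is
again faithfully flat over `A`, being a filtered colimit of finite tensor products, and each of
these algebras maps to it. Iterating this construction along a regular cardinal `κ` produces `T`.
A presentation over `T` with fewer than `κ` relations involves fewer than `κ` coefficients, so it is
already defined over some stage `A` of the iteration. By descent along `A → T`, the algebra it
presents over `A` is faithfully flat; hence it maps to the next stage, and so to `T`.
-/

open CategoryTheory Limits

universe v w

section MorphismProperty

variable {C : Type u} [Category.{v} C] (W : MorphismProperty C) {X : C}

instance underObj_isClosedUnderColimitsOfShape {J : Type w} [Category.{w} J] [IsFiltered J]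
    [W.IsStableUnderColimitsOfShape J] :
    (W.underObj (X := X)).IsClosedUnderColimitsOfShape J where
  colimitsOfShape_le := by
    rintro Y ⟨p, hp⟩
    have : IsConnected J := IsFiltered.isConnected J
    exact MorphismProperty.IsStableUnderColimitsOfShape.condition (W := W) (J := J) _
      (p.diag ⋙ Under.forget X) _ ((Under.forget X).mapCocone p.cocone)
      (isColimitConstCocone J X) (isColimitOfPreserves (Under.forget X) p.isColimit)
      { app := fun j => (p.diag.obj j).hom } hp Y.hom
      fun j => (Category.id_comp _).trans (Under.w (p.cocone.ι.app j)).symm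

lemma pt_hom_mem_of_isColimit_binaryCofan [W.IsStableUnderComposition]
    [W.IsStableUnderCobaseChange] {Y Z : Under X} {c : BinaryCofan Y Z} (hc : IsColimit c)
    (hY : W Y.hom) (hZ : W Z.hom) : W c.pt.hom := by
  have h : IsPushout Y.hom Z.hom c.inl.right c.inr.right :=
    { w := (Under.w c.inl).trans (Under.w c.inr).symm
      isColimit' := ⟨IsColimit.pushoutCoconeEquivBinaryCofanInverse (f := Y.hom) (g := Z.hom) hc⟩ }
  have hw : Y.hom ≫ c.inl.right = c.pt.hom := Under.w c.inl
  exact hw ▸ W.comp_mem _ _ hY (W.of_isPushout h hZ)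

instance underObj_isClosedUnderBinaryCoproducts [W.IsStableUnderComposition]
    [W.IsStableUnderCobaseChange] :
    (W.underObj (X := X)).IsClosedUnderBinaryCoproducts where
  colimitsOfShape_le := by
    rintro _ ⟨p, hp⟩
    exact pt_hom_mem_of_isColimit_binaryCofan W
      ((IsColimit.precomposeInvEquiv (diagramIsoPair p.diag) p.cocone).symm p.isColimit)
      (hp ⟨.left⟩) (hp ⟨.right⟩)

lemma coproduct_mem_of_isClosedUnderFiniteCoproducts (P : ObjectProperty C)
    [HasFiniteCoproducts C] {α : Type w} [HasColimitsOfShape (Finset (Discrete α)) C]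
    [P.IsClosedUnderFiniteCoproducts] [P.IsClosedUnderColimitsOfShape (Finset (Discrete α))]
    (f : α → C) [HasCoproduct f] (hf : ∀ a, P (f a)) : P (∐ f) :=
  P.prop_of_isColimit (J := Finset (Discrete α))
    (c := CoproductsFromFiniteFiltered.finiteSubcoproductsCocone f)
    (CoproductsFromFiniteFiltered.isColimitFiniteSubproductsCocone f)
    fun _ => P.prop_coproduct fun _ => hf _

variable [HasColimitsOfSize.{w, w} C] [W.IsMultiplicative] [W.IsStableUnderCobaseChange]
  [MorphismProperty.IsStableUnderFilteredColimits.{w, w} W]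

theorem exists_mem_forall_comp_eq {α : Type w} {Y : α → C} (f : ∀ a, X ⟶ Y a)
    (hf : ∀ a, W (f a)) : ∃ (Z : C) (g : X ⟶ Z), W g ∧ ∀ a, ∃ h, f a ≫ h = g := by
  have : HasColimitsOfSize.{0, 0} (Under X) := hasColimitsOfSizeShrink.{0, 0, w, w} _
  have : (W.underObj (X := X)).IsClosedUnderFiniteCoproducts := .mk'
  let Z := ∐ fun a => Under.mk (f a)
  exact ⟨Z.right, Z.hom, coproduct_mem_of_isClosedUnderFiniteCoproducts W.underObj _ hf,
    fun a => ⟨_, Under.w (Sigma.ι (fun a => Under.mk (f a)) a)⟩⟩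

open SmallObject in
theorem exists_isColimit_forall_comp_eq_ι_app {α : C → Type w} {Y : ∀ A, α A → C}
    (f : ∀ A a, A ⟶ Y A a) (hf : ∀ A a, W (f A a)) (X : C)
    (J : Type w) [LinearOrder J] [WellFoundedLT J] [Nonempty J] [NoMaxOrder J] :
    ∃ (F : J ⥤ C) (c : Cocone F) (_ : IsColimit c) (g : X ⟶ c.pt),
      W g ∧ (∀ j, W (c.ι.app j)) ∧ ∀ j a, ∃ h, f (F.obj j) a ≫ h = c.ι.app j := by
  let _ : OrderBot J := WellFoundedLT.toOrderBot J
  let _ : SuccOrder J := SuccOrder.ofLinearWellFoundedLT J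
  choose succ η hη hfη using fun A => exists_mem_forall_comp_eq W (f A) (hf A)
  let Φ : SuccStruct C := { X₀ := X, succ := succ, toSucc := η }
  have hΦ : Φ.prop ≤ W := fun _ _ _ ⟨A⟩ => hη A
  let tc := (Φ.transfiniteCompositionOfShapeιIteration J).ofLE hΦ
  refine ⟨Φ.iterationFunctor J, Φ.iterationCocone J, Φ.isColimitIterationCocone J, Φ.ιIteration J,
    W.transfiniteCompositionsOfShape_le J _ tc.mem, tc.mem_incl_app, fun j a => ?_⟩
  obtain ⟨h, hh⟩ := hfη ((Φ.iterationFunctor J).obj j) a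
  have hmap := Φ.iterationFunctor_map_succ j (not_isMax j)
  refine ⟨h ≫ (Φ.iterationFunctorObjSuccIso j (not_isMax j)).inv ≫
    (Φ.iterationCocone J).ι.app (Order.succ j), ?_⟩
  rw [← (Φ.iterationCocone J).w (homOfLE (Order.le_succ j)), hmap, reassoc_of% hh, Category.assoc]

end MorphismProperty

section FilteredColimits

variable {J : Type u} [SmallCategory J] {F G : J ⥤ CommRingCat.{u}} {c : Cocone F} {d : Cocone G}

lemma exists_ι_app_hom_eq {κ : Cardinal.{w}} [Fact κ.IsRegular] [IsCardinalFiltered J κ]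
    (hc : IsColimit c) {ι : Type*} (hι : HasCardinalLT ι κ) (a : ι → c.pt) :
    ∃ (j : J) (a' : ι → F.obj j), ∀ i, (c.ι.app j).hom (a' i) = a i := by
  have := isFiltered_of_isCardinalFiltered J κ
  choose k b hb using fun i => Concrete.isColimit_exists_rep F hc (a i)
  refine ⟨_, fun i => (F.map (IsCardinalFiltered.toMax k hι i)).hom (b i), fun i => ?_⟩
  rw [← CommRingCat.comp_apply, c.w]
  exact hb i

variable [IsFiltered J]

lemma exists_map_hom_eq_map_hom_of_ι_app_hom_eq (hc : IsColimit c) {j : J} {x y : F.obj j}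
    (h : (c.ι.app j).hom x = (c.ι.app j).hom y) :
    ∃ (k : J) (f : j ⟶ k), (F.map f).hom x = (F.map f).hom y := by
  obtain ⟨l, u, v, huv⟩ := Concrete.isColimit_exists_of_rep_eq F hc x y h
  refine ⟨_, u ≫ IsFiltered.coeqHom u v, ?_⟩
  conv_rhs => rw [IsFiltered.coeq_condition u v]
  simp only [Functor.map_comp, CommRingCat.comp_apply]
  exact congrArg _ huv

variable {f : F ⟶ G} {φ : c.pt ⟶ d.pt}

/- The right-hand side is a natural number so that it makes sense at every stage; the values `0` and
`1` give flatness and faithfulness. -/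
lemma exists_lift_of_sum_mul_eq_natCast (hc : IsColimit c) (hd : IsColimit d)
    (hφ : ∀ j, c.ι.app j ≫ φ = f.app j ≫ d.ι.app j) {ι : Type*} [Fintype ι]
    (a : ι → c.pt) (b : ι → d.pt) (n : ℕ) (h : ∑ i, φ.hom (a i) * b i = n) :
    ∃ (j : J) (a' : ι → F.obj j) (b' : ι → G.obj j),
      (∀ i, (c.ι.app j).hom (a' i) = a i) ∧ (∀ i, (d.ι.app j).hom (b' i) = b i) ∧
        ∑ i, (f.app j).hom (a' i) * b' i = n := by
  have := Cardinal.fact_isRegular_aleph0.{u}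
  have := (isCardinalFiltered_aleph0_iff.{u} J).mpr inferInstance
  have hι : HasCardinalLT ι Cardinal.aleph0.{u} := (hasCardinalLT_aleph0_iff ι).mpr inferInstance
  obtain ⟨j₁, a₁, ha₁⟩ := exists_ι_app_hom_eq hc hι a
  obtain ⟨j₂, b₂, hb₂⟩ := exists_ι_app_hom_eq hd hι b
  let j := IsFiltered.max j₁ j₂
  let a' i := (F.map (IsFiltered.leftToMax j₁ j₂)).hom (a₁ i)
  let b' i := (G.map (IsFiltered.rightToMax j₁ j₂)).hom (b₂ i)
  have ha i : (c.ι.app j).hom (a' i) = a i := by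
    rw [← ha₁, ← c.w (IsFiltered.leftToMax j₁ j₂), CommRingCat.comp_apply]
  have hb i : (d.ι.app j).hom (b' i) = b i := by
    rw [← hb₂, ← d.w (IsFiltered.rightToMax j₁ j₂), CommRingCat.comp_apply]
  have hab : (d.ι.app j).hom (∑ i, (f.app j).hom (a' i) * b' i) =
      (d.ι.app j).hom (n : G.obj j) := by
    simp only [map_sum, map_mul, map_natCast, hb, ← h, ← ha, ← CommRingCat.comp_apply, hφ]
  obtain ⟨k, g, hg⟩ := exists_map_hom_eq_map_hom_of_ι_app_hom_eq hd hab
  refine ⟨k, fun i => (F.map g).hom (a' i), fun i => (G.map g).hom (b' i), fun i => ?_,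
    fun i => ?_, ?_⟩
  · rw [← CommRingCat.comp_apply, c.w, ha]
  · rw [← CommRingCat.comp_apply, d.w, hb]
  · simpa only [map_sum, map_mul, map_natCast, ← CommRingCat.comp_apply, f.naturality] using hg

lemma flat_of_isColimit (hc : IsColimit c) (hd : IsColimit d)
    (hφ : ∀ j, c.ι.app j ≫ φ = f.app j ≫ d.ι.app j) (hf : ∀ j, (f.app j).hom.Flat) :
    φ.hom.Flat := by
  algebraize [φ.hom]
  -- Equational criterion: a relation in `d.pt` lives at some stage, where it is trivial.
  refine Module.Flat.of_forall_isTrivialRelation fun {l a b} h => ?_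
  simp only [Algebra.smul_def, RingHom.algebraMap_toAlgebra] at h
  obtain ⟨j, a', b', ha, hb, hab⟩ :=
    exists_lift_of_sum_mul_eq_natCast hc hd hφ a b 0 (h.trans Nat.cast_zero.symm)
  have hfj := hf j
  algebraize [(f.app j).hom]
  obtain ⟨k, r, y, hy, hr⟩ := Module.Flat.isTrivialRelation_of_sum_smul_eq_zero
    (R := F.obj j) (M := G.obj j) (f := a') (x := b') (hab.trans Nat.cast_zero)
  refine ⟨k, fun i m => (c.ι.app j).hom (r i m), fun m => (d.ι.app j).hom (y m), fun i => ?_,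
    fun m => ?_⟩
  · have hφr x : φ.hom ((c.ι.app j).hom x) = (d.ι.app j).hom ((f.app j).hom x) :=
      congr($(hφ j).hom x)
    simp only [← hb, hy, map_sum, Algebra.smul_def, map_mul]
    simp only [RingHom.algebraMap_toAlgebra, hφr]
  · simp only [← ha, ← map_mul, ← map_sum, hr, map_zero]

lemma faithfullyFlat_of_isColimit (hc : IsColimit c) (hd : IsColimit d)
    (hφ : ∀ j, c.ι.app j ≫ φ = f.app j ≫ d.ι.app j) (hf : ∀ j, (f.app j).hom.FaithfullyFlat) :
    φ.hom.FaithfullyFlat := by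
  have hflat := flat_of_isColimit hc hd hφ fun j => (hf j).flat
  algebraize [φ.hom]
  refine (Module.FaithfullyFlat.iff_flat_and_ideal_smul_eq_top _ _).mpr ⟨hflat, fun I hI => ?_⟩
  have hmap : I.map φ.hom = ⊤ := by
    rw [Ideal.smul_top_eq_map] at hI
    exact (Submodule.restrictScalars_eq_top_iff _ _ _).mp hI
  -- `1 ∈ I • d.pt` lives at some stage, so the contraction of `I` to that stage is the unit ideal.
  obtain ⟨n, b, a, hab⟩ := Submodule.mem_span_set'.mp ((Ideal.eq_top_iff_one _).mp hmap)
  choose a₀ haI ha₀ using fun i => (a i).2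
  obtain ⟨j, a', b', ha, -, hab'⟩ := exists_lift_of_sum_mul_eq_natCast hc hd hφ a₀ b 1 (by
    simpa only [ha₀, smul_eq_mul, mul_comm, Nat.cast_one] using hab)
  have hfj := hf j
  algebraize [(f.app j).hom]
  have hmapj : (I.comap (c.ι.app j).hom).map (f.app j).hom = ⊤ := by
    rw [Ideal.eq_top_iff_one, ← Nat.cast_one, ← hab']
    exact Ideal.sum_mem _ fun i _ => Ideal.mul_mem_right _ _
      (Ideal.mem_map_of_mem _ (by rw [Ideal.mem_comap, ha]; exact haI i))
  exact Ideal.comap_eq_top_iff.mp (Ideal.map_injective_of_faithfullyFlat (A := F.obj j)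
    (B := G.obj j) (hmapj.trans (Ideal.map_top _).symm))

end FilteredColimits

/-- The class of faithfully flat morphisms in the category of commutative rings. -/
abbrev faithfullyFlatMorphisms : MorphismProperty CommRingCat.{u} :=
  RingHom.toMorphismProperty RingHom.FaithfullyFlat

instance faithfullyFlatMorphisms_isMultiplicative :
    faithfullyFlatMorphisms.{u}.IsMultiplicative where
  id_mem _ := .of_bijective Function.bijective_id
  comp_mem f g hf hg := RingHom.FaithfullyFlat.stableUnderComposition f.hom g.hom hf hg

instance faithfullyFlatMorphisms_isStableUnderCobaseChange :
    faithfullyFlatMorphisms.{u}.IsStableUnderCobaseChange :=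
  RingHom.isStableUnderCobaseChange_toMorphismProperty_iff.mpr
    RingHom.FaithfullyFlat.isStableUnderBaseChange

instance faithfullyFlatMorphisms_isStableUnderFilteredColimits :
    MorphismProperty.IsStableUnderFilteredColimits.{u, u} faithfullyFlatMorphisms.{u} where
  isStableUnderColimitsOfShape _ _ _ :=
    ⟨fun _ _ _ _ hc hd _ hf _ hφ => faithfullyFlat_of_isColimit hc hd hφ hf⟩

section Descent

variable (A : Type*) {T : Type*} [CommRing A] [CommRing T] [Algebra A T]

variable (T) in
lemma faithfullyFlat_of_faithfullyFlat_tensorProduct (Q : Type*) [CommRing Q] [Algebra A Q]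
    [Module.FaithfullyFlat A T] [Module.FaithfullyFlat T (T ⊗[A] Q)] :
    Module.FaithfullyFlat A Q := by
  have : Module.Flat A Q := Module.Flat.of_flat_tensorProduct A Q T
  have : Module.FaithfullyFlat A (T ⊗[A] Q) := .trans A T _
  refine .of_comap_surjective fun p => ?_
  obtain ⟨q, rfl⟩ := PrimeSpectrum.comap_surjective_of_faithfullyFlat (B := T ⊗[A] Q) p
  let i : Q →ₐ[A] T ⊗[A] Q := Algebra.TensorProduct.includeRight
  exact ⟨q.comap (i : Q →+* T ⊗[A] Q), by rw [← PrimeSpectrum.comap_comp_apply, i.comp_algebraMap]⟩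

variable {R ι σ : Type*} [CommRing R] [Algebra T R] (P : Algebra.Presentation T R ι σ)

lemma faithfullyFlat_modelOfHasCoeffs [Algebra A R] [IsScalarTower A T R] [P.HasCoeffs A]
    [Module.FaithfullyFlat A T] [Module.FaithfullyFlat T R] :
    Module.FaithfullyFlat A (P.ModelOfHasCoeffs A) :=
  have : Module.FaithfullyFlat T (T ⊗[A] P.ModelOfHasCoeffs A) :=
    .of_linearEquiv T R (P.tensorModelOfHasCoeffsEquiv A).toLinearEquiv
  faithfullyFlat_of_faithfullyFlat_tensorProduct A T _

theorem nonempty_algHom_of_coeffs_subset_range [Module.FaithfullyFlat A T]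
    [Module.FaithfullyFlat T R] (hP : P.coeffs ⊆ Set.range (algebraMap A T))
    (hA : ∀ I : Ideal (MvPolynomial ι A), Module.FaithfullyFlat A (MvPolynomial ι A ⧸ I) →
      Nonempty (MvPolynomial ι A ⧸ I →ₐ[A] T)) :
    Nonempty (R →ₐ[T] T) := by
  let _ : Algebra A R := Algebra.compHom R (algebraMap A T)
  have : IsScalarTower A T R := .of_algebraMap_eq' rfl
  have : P.HasCoeffs A := ⟨hP⟩
  obtain ⟨g⟩ := hA _ (faithfullyFlat_modelOfHasCoeffs A P)
  exact ⟨(Algebra.TensorProduct.lift (.id T T) g fun _ _ => .all _ _).comp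
    (P.tensorModelOfHasCoeffsEquiv A).symm.toAlgHom⟩

end Descent

lemma hasCardinalLT_coeffs {T R ι : Type*} {σ : Type w} [CommRing T] [CommRing R] [Algebra T R]
    (P : Algebra.Presentation T R ι σ) {κ : Cardinal.{w}} [Fact κ.IsRegular]
    (hσ : HasCardinalLT σ κ) : HasCardinalLT P.coeffs κ :=
  hasCardinalLT_iUnion _ hσ fun _ =>
    hasCardinalLT_of_finite _ _ (Fact.out : κ.IsRegular).aleph0_le

theorem exists_faithfullyFlat_with_splitting_of_countably_presented_covers_general
    (S : Type u) [CommRing S] (ι σ : Type u) :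
    ∃ (T : Type u) (_ : CommRing T) (_ : Algebra S T),
      Module.FaithfullyFlat S T ∧
        ∀ (R : Type v) [CommRing R] [Algebra T R],
          Module.FaithfullyFlat T R → Algebra.Presentation T R ι σ → Nonempty (R →ₐ[T] T) := by
  let κ := Order.succ (max Cardinal.aleph0 (Cardinal.mk σ))
  have hκ : κ.IsRegular := Cardinal.isRegular_succ (le_max_left _ _)
  have : Fact κ.IsRegular := ⟨hκ⟩
  have hσ : HasCardinalLT σ κ :=
    (hasCardinalLT_iff_cardinal_mk_lt _ _).mpr (Order.lt_succ_of_le (le_max_right _ _))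
  have : NoMaxOrder κ.ord.ToType := Cardinal.noMaxOrder hκ.aleph0_le
  have : Nonempty κ.ord.ToType := IsCardinalFiltered.nonempty _ κ
  obtain ⟨F, c, hc, g, hg, hι, hsplit⟩ := exists_isColimit_forall_comp_eq_ι_app
    faithfullyFlatMorphisms
    (α := fun A => {I : Ideal (MvPolynomial ι A) // Module.FaithfullyFlat A (MvPolynomial ι A ⧸ I)})
    (fun A I => CommRingCat.ofHom (algebraMap A (MvPolynomial ι A ⧸ I.1)))
    (fun A I => RingHom.faithfullyFlat_algebraMap_iff.mpr I.2) (CommRingCat.of S) κ.ord.ToType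
  refine ⟨c.pt, inferInstance, g.hom.toAlgebra, hg, fun R _ _ _ P => ?_⟩
  obtain ⟨j, a, ha⟩ := exists_ι_app_hom_eq hc (hasCardinalLT_coeffs P hσ) Subtype.val
  let _ : Algebra (F.obj j) c.pt := (c.ι.app j).hom.toAlgebra
  have : Module.FaithfullyFlat (F.obj j) c.pt := hι j
  refine nonempty_algHom_of_coeffs_subset_range (F.obj j) P (fun x hx => ⟨a ⟨x, hx⟩, ha _⟩)
    fun I hI => ?_
  obtain ⟨h, hh⟩ := hsplit j ⟨I, hI⟩
  exact ⟨{ h.hom with commutes' := fun x => congr($(hh).hom x) }⟩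

lemma faithfullyFlatAlgebra_iff {A B : Type u} [CommRing A] [CommRing B] [Algebra A B] :
    FaithfullyFlatAlgebra A B ↔ Module.FaithfullyFlat A B :=
  (Module.FaithfullyFlat.iff_flat_and_rTensor_reflects_triviality A B).symm

lemma nonempty_presentation_of_countablyPresentedAlgebra {T R : Type u} [CommRing T] [CommRing R]
    [Algebra T R] (h : CountablyPresentedAlgebra T R) :
    Nonempty (Algebra.Presentation T R ℕ ℕ) := by
  obtain ⟨f, hf, s, hs, hker⟩ := h
  -- The set `s` may be empty, so `0` is added before enumerating it.
  obtain ⟨r, hr⟩ := (hs.insert 0).exists_eq_range (Set.insert_nonempty _ _)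
  have haeval : MvPolynomial.aeval (fun n => f (MvPolynomial.X n)) = f :=
    (MvPolynomial.aeval_unique f).symm
  exact ⟨{
    Algebra.Generators.ofSurjective (fun n => f (MvPolynomial.X n)) (by rwa [haeval]) with
    relation := r
    span_range_relation_eq_ker := by
      rw [← hr, Ideal.span_insert_zero, hker]
      exact congrArg RingHom.ker haeval.symm }⟩

/-- For every commutative ring `S` there exists a faithfully flat `S`-algebra `T` such that
every countably presented faithfully flat `T`-algebra `R` admits a `T`-algebra homomorphism
`R → T` (i.e. the cover `T → R` splits). -/
theorem exists_faithfullyFlat_with_splitting_of_countably_presented_covers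
    (S : Type u) [CommRing S] :
    ∃ (T : Type u) (_ : CommRing T) (_ : Algebra S T),
      FaithfullyFlatAlgebra S T ∧
        ∀ (R : Type u) (_ : CommRing R) (_ : Algebra T R),
          FaithfullyFlatAlgebra T R → CountablyPresentedAlgebra T R →
            Nonempty (R →ₐ[T] T) := by
  obtain ⟨T, _, _, hT, h⟩ :=
    exists_faithfullyFlat_with_splitting_of_countably_presented_covers_general
      S (ULift.{u} ℕ) (ULift.{u} ℕ)
  refine ⟨T, _, _, faithfullyFlatAlgebra_iff.mpr hT, fun R _ _ hR hRp => ?_⟩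
  obtain ⟨P⟩ := nonempty_presentation_of_countablyPresentedAlgebra hRp
  exact h R (faithfullyFlatAlgebra_iff.mp hR) (P.reindex Equiv.ulift Equiv.ulift)
end

section
/- Let A be a commutative ring, let a, b ∈ A, and let M be an A-module. Write M_a, M_b, M_{ab} for the localizations of M at the multiplicative sets of powers of a, of b, and of a·b, respectively. Assume: (i) a is a nonzerodivisor on M, i.e. a·m = 0 implies m = 0 for m ∈ M; and (ii) the sequence 0 → M → M_a ⊕ M_b → M_{ab} is exact in the middle, i.e. whenever u ∈ M_a and v ∈ M_b have the same image in M_{ab}, there exists x ∈ M whose image in M_a is u and whose image in M_b is v. Then the quotient M/aM has no b-torsion: for all m, m' ∈ M with b·m = a·m', one has m ∈ aM. -/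
/-!
If `b • m = a • m'`, then the fractions `m / a` and `m' / b` agree in `M_{ab}`, so they come from
some `x : M`. Clearing denominators, `a • x` and `m` have the same image in `M_a`, and `M → M_a`
is injective because `a` is regular on `M`.
-/

section Square

variable {A M N P Q : Type*} [CommSemiring A] [AddCommMonoid M] [AddCommMonoid N]
  [AddCommMonoid P] [AddCommMonoid Q] [Module A M] [Module A N] [Module A P] [Module A Q]
  {a b : A} {f : M →ₗ[A] N} {g : M →ₗ[A] P} {φ : N →ₗ[A] Q} {ψ : P →ₗ[A] Q}

theorem map_eq_map_of_smul_eq_of_smul_eq (hab : IsSMulRegular Q (a * b))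
    (hcomm : φ ∘ₗ f = ψ ∘ₗ g) {m m' : M} (h : b • m = a • m')
    {u : N} {v : P} (hu : a • u = f m) (hv : b • v = g m') : φ u = ψ v := by
  apply hab
  calc
    (a * b) • φ u = φ (b • a • u) := by rw [mul_comm, mul_smul, map_smul, map_smul]
    _ = φ (f (b • m)) := by rw [hu, map_smul f]
    _ = ψ (g (b • m)) := LinearMap.congr_fun hcomm _
    _ = ψ (a • b • v) := by rw [h, hv, map_smul g]
    _ = (a * b) • ψ v := by rw [map_smul, map_smul, mul_smul]

theorem exists_eq_smul_of_smul_surjective (hf : Function.Injective f)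
    (ha : Function.Surjective (a • · : N → N)) (hb : Function.Surjective (b • · : P → P))
    (hab : IsSMulRegular Q (a * b)) (hcomm : φ ∘ₗ f = ψ ∘ₗ g)
    (hexact : ∀ u v, φ u = ψ v → ∃ x, f x = u) {m m' : M} (h : b • m = a • m') :
    ∃ m₀, m = a • m₀ := by
  obtain ⟨u, hu⟩ := ha (f m)
  obtain ⟨v, hv⟩ := hb (g m')
  obtain ⟨x, hx⟩ := hexact u v (map_eq_map_of_smul_eq_of_smul_eq hab hcomm h hu hv)
  refine ⟨x, hf ?_⟩
  rw [map_smul, hx]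
  exact hu.symm

end Square

section Away

variable {A M N : Type*} [CommSemiring A] [AddCommMonoid M] [AddCommMonoid N] [Module A M]
  [Module A N] {a : A}

theorem smul_bijective_of_away (f : M →ₗ[A] N) [IsLocalizedModule.Away a f] :
    Function.Bijective (a • · : N → N) :=
  (Module.End.isUnit_iff _).mp (IsLocalizedModule.Away.isUnit_algebraMap f a)

theorem injective_of_away_of_isSMulRegular (f : M →ₗ[A] N) [IsLocalizedModule.Away a f]
    (ha : IsSMulRegular M a) : Function.Injective f := by
  rw [IsLocalizedModule.injective_iff_isRegular (Submonoid.powers a)]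
  rintro ⟨_, n, rfl⟩
  exact ha.pow n

end Away

theorem no_b_torsion_mod_a_general {A M Ma Mb Mab : Type*} [CommSemiring A]
    [AddCommMonoid M] [AddCommMonoid Ma] [AddCommMonoid Mb] [AddCommMonoid Mab]
    [Module A M] [Module A Ma] [Module A Mb] [Module A Mab] {a b : A}
    (f : M →ₗ[A] Ma) (g : M →ₗ[A] Mb) (i : M →ₗ[A] Mab) [IsLocalizedModule.Away a f]
    [IsLocalizedModule.Away b g] [IsLocalizedModule.Away (a * b) i]
    {φ : Ma →ₗ[A] Mab} {ψ : Mb →ₗ[A] Mab} (hφ : φ ∘ₗ f = i) (hψ : ψ ∘ₗ g = i)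
    (ha : IsSMulRegular M a) (hexact : ∀ u v, φ u = ψ v → ∃ x, f x = u)
    {m m' : M} (h : b • m = a • m') : ∃ m₀, m = a • m₀ :=
  exists_eq_smul_of_smul_surjective (injective_of_away_of_isSMulRegular f ha)
    (smul_bijective_of_away f).surjective (smul_bijective_of_away g).surjective
    (smul_bijective_of_away i).injective (hφ.trans hψ.symm) hexact h

/-- Let `A` be a commutative ring, `a, b ∈ A`, and `M` an `A`-module.  Write `M_a`, `M_b`,
`M_{ab}` for the localizations of `M` at the powers of `a`, `b` and `a·b` respectively, and
let `φa : M_a → M_{ab}`, `φb : M_b → M_{ab}` be the canonical maps (characterized by the fact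
that they commute with the localization maps from `M`).  Assume that `a` is a nonzerodivisor
on `M` and that the sequence `0 → M → M_a ⊕ M_b → M_{ab}` is exact in the middle: whenever
`u ∈ M_a` and `v ∈ M_b` have the same image in `M_{ab}`, there is `x ∈ M` mapping to `u` and
to `v`.  Then `M/aM` has no `b`-torsion: if `b·m = a·m'` then `m ∈ aM`. -/
theorem no_b_torsion_mod_a {A : Type*} [CommRing A] (a b : A)
    (M : Type*) [AddCommGroup M] [Module A M]
    (φa : LocalizedModule (Submonoid.powers a) M →ₗ[A]
      LocalizedModule (Submonoid.powers (a * b)) M)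
    (φb : LocalizedModule (Submonoid.powers b) M →ₗ[A]
      LocalizedModule (Submonoid.powers (a * b)) M)
    (hφa : ∀ m : M, φa (LocalizedModule.mkLinearMap (Submonoid.powers a) M m)
      = LocalizedModule.mkLinearMap (Submonoid.powers (a * b)) M m)
    (hφb : ∀ m : M, φb (LocalizedModule.mkLinearMap (Submonoid.powers b) M m)
      = LocalizedModule.mkLinearMap (Submonoid.powers (a * b)) M m)
    (hreg : ∀ m : M, a • m = 0 → m = 0)
    (hexact : ∀ (u : LocalizedModule (Submonoid.powers a) M)
      (v : LocalizedModule (Submonoid.powers b) M), φa u = φb v →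
      ∃ x : M, LocalizedModule.mkLinearMap (Submonoid.powers a) M x = u ∧
        LocalizedModule.mkLinearMap (Submonoid.powers b) M x = v) :
    ∀ m m' : M, b • m = a • m' → ∃ m₀ : M, m = a • m₀ := by
  intro m m' h
  exact no_b_torsion_mod_a_general _ _ _ (LinearMap.ext hφa) (LinearMap.ext hφb)
    (isSMulRegular_iff_right_eq_zero_of_smul.mpr hreg)
    (fun u v huv ↦ (hexact u v huv).imp fun _ hx ↦ hx.1) h
end

section
/- Let I be a nonempty directed partially ordered set in which every countable subset has an upper bound, let (R_i)_{i∈I} be a directed system of commutative rings with colimit R, and let A be a commutative R-algebra which is countably presented. Then there exist an index i ∈ I and a countably presented commutative R_i-algebra B together with an isomorphism of R-algebras A ≅ R ⊗_{R_i} B. -/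
universe u

open TensorProduct

/-!
A countable presentation of `A` over `R` involves only countably many coefficients. Each of them
comes from some stage of the directed system, and a common upper bound of these stages is a single
stage over which the whole presentation is defined. The same generators and relations over that
stage define `B`.
-/

theorem countable_presentation_coeffs {R S ι σ : Type*} [CommRing R] [CommRing S] [Algebra R S]
    [Countable σ] (P : Algebra.Presentation R S ι σ) : P.coeffs.Countable :=
  Set.countable_iUnion fun r => (P.relation r).coeffs.countable_toSet

namespace CountablyPresentedAlgebra

variable {R A : Type u} [CommRing R] [CommRing A] [Algebra R A]

theorem exists_presentation (hA : CountablyPresentedAlgebra R A) :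
    ∃ σ : Type u, Countable σ ∧ Nonempty (Algebra.Presentation R A ℕ σ) := by
  obtain ⟨g, hg, s, hs, hspan⟩ := hA
  refine ⟨s, hs.to_subtype, ⟨{
    __ := Algebra.Generators.ofAlgHom g hg
    relation := Subtype.val
    span_range_relation_eq_ker := ?_ }⟩⟩
  rw [Subtype.range_coe, hspan, Algebra.Generators.ker_eq_ker_aeval_val]
  exact congrArg RingHom.ker (MvPolynomial.aeval_unique g)

theorem of_presentation {σ : Type*} [Countable σ] (P : Algebra.Presentation R A ℕ σ) :
    CountablyPresentedAlgebra R A :=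
  ⟨MvPolynomial.aeval P.val, P.aeval_val_surjective, Set.range P.relation,
    Set.countable_range P.relation, P.span_range_relation_eq_ker.trans P.ker_eq_ker_aeval_val⟩

theorem exists_descent_of_coeffs_subset_range {σ : Type*} [Countable σ]
    (P : Algebra.Presentation R A ℕ σ) {T : Type u} [CommRing T] [Algebra T R]
    (hP : P.coeffs ⊆ Set.range (algebraMap T R)) :
    ∃ (B : Type u) (_ : CommRing B) (_ : Algebra T B),
      CountablyPresentedAlgebra T B ∧ Nonempty (A ≃ₐ[R] R ⊗[T] B) := by
  let _ : Algebra T A := Algebra.compHom A (algebraMap T R)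
  have : IsScalarTower T R A := .of_algebraMap_eq' rfl
  have : P.HasCoeffs T := ⟨hP⟩
  exact ⟨P.ModelOfHasCoeffs T, inferInstance, inferInstance, of_presentation .naive,
    ⟨(P.tensorModelOfHasCoeffsEquiv T).symm⟩⟩

end CountablyPresentedAlgebra

theorem exists_subset_range_directLimit_of {ι : Type*} [Preorder ι] [IsDirectedOrder ι] [Nonempty ι]
    (hι : ∀ s : Set ι, s.Countable → BddAbove s) {G : ι → Type*} [∀ i, CommRing (G i)]
    {f : ∀ i j, i ≤ j → G i → G j} {c : Set (Ring.DirectLimit G f)} (hc : c.Countable) :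
    ∃ i, c ⊆ Set.range (Ring.DirectLimit.of G f i) := by
  choose stage rep of_rep using Ring.DirectLimit.exists_of (G := G) (f := f)
  obtain ⟨i, hi⟩ := hι (stage '' c) (hc.image stage)
  refine ⟨i, fun z hz => ?_⟩
  have stage_le : stage z ≤ i := hi (Set.mem_image_of_mem stage hz)
  exact ⟨f (stage z) i stage_le (rep z), (Ring.DirectLimit.of_f stage_le _).trans (of_rep z)⟩

theorem countablyPresentedAlgebra_descends_general {ι : Type*} (G : ι → Type u)
    [∀ i, CommRing (G i)] {R A : Type u} [CommRing R] [CommRing A] [Algebra R A]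
    [∀ i, Algebra (G i) R]
    (hG : ∀ c : Set R, c.Countable → ∃ i, c ⊆ Set.range (algebraMap (G i) R))
    (hA : CountablyPresentedAlgebra R A) :
    ∃ (i : ι) (B : Type u) (_ : CommRing B) (_ : Algebra (G i) B),
      CountablyPresentedAlgebra (G i) B ∧ Nonempty (A ≃ₐ[R] R ⊗[G i] B) := by
  obtain ⟨σ, _, ⟨P⟩⟩ := hA.exists_presentation
  obtain ⟨i, hi⟩ := hG P.coeffs (countable_presentation_coeffs P)
  exact ⟨i, CountablyPresentedAlgebra.exists_descent_of_coeffs_subset_range P hi⟩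

/-- Let `ι` be a nonempty directed partially ordered set in which every countable subset has
an upper bound, let `(G i)` be a directed system of commutative rings indexed by `ι` with
colimit `R`, and let `A` be a countably presented commutative `R`-algebra.  Then there are an
index `i`, a countably presented commutative `G i`-algebra `B`, and an isomorphism of
`R`-algebras `A ≅ R ⊗[G i] B`. -/
theorem countablyPresentedAlgebra_descends
    (ι : Type u) [PartialOrder ι] [IsDirected ι (· ≤ ·)] [Nonempty ι]
    (hcountable : ∀ s : Set ι, s.Countable → ∃ ub : ι, ∀ i ∈ s, i ≤ ub)
    (G : ι → Type u) [∀ i, CommRing (G i)]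
    (f : ∀ i j, i ≤ j → G i →+* G j)
    [DirectedSystem G fun i j h => ⇑(f i j h)]
    (A : Type u) [CommRing A]
    [Algebra (Ring.DirectLimit G fun i j h => ⇑(f i j h)) A]
    (hA : CountablyPresentedAlgebra (Ring.DirectLimit G fun i j h => ⇑(f i j h)) A) :
    ∃ (i : ι) (B : Type u) (_ : CommRing B) (_ : Algebra (G i) B),
      CountablyPresentedAlgebra (G i) B ∧
        letI : Algebra (G i) (Ring.DirectLimit G fun i j h => ⇑(f i j h)) :=
          (Ring.DirectLimit.of G (fun i j h => ⇑(f i j h)) i).toAlgebra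
        Nonempty (A ≃ₐ[Ring.DirectLimit G fun i j h => ⇑(f i j h)]
          ((Ring.DirectLimit G fun i j h => ⇑(f i j h)) ⊗[G i] B)) := by
  let _ (i : ι) : Algebra (G i) (Ring.DirectLimit G fun i j h => ⇑(f i j h)) :=
    (Ring.DirectLimit.of G (fun i j h => ⇑(f i j h)) i).toAlgebra
  exact countablyPresentedAlgebra_descends_general G
    (fun _ hc => exists_subset_range_directLimit_of hcountable hc) hA
end

section
/- Let A be a commutative ring, let ξ, p ∈ A, let M and M' be A-modules, and let f : M → M' be an A-linear map. Assume that ξ is a nonzerodivisor on M' (ξ·y = 0 implies y = 0 for y ∈ M') and that M'/ξM' has no p-torsion (for y ∈ M', p·y ∈ ξM' implies y ∈ ξM'). For each natural number i define the submodule Fil^i M := f⁻¹(ξ^i·M') of M. Then for every i ≥ 1 and every m ∈ Fil^{i−1}M with p·m ∈ Fil^i M, one has m ∈ Fil^i M. Consequently, Fil^i M ∩ p·Fil^{i−1}M = p·Fil^i M, i.e. the natural map Fil^i M / p·Fil^i M → Fil^{i−1}M / p·Fil^{i−1}M is injective. -/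
/-!
Regularity of `p` passes from `M'/ξM'` to every `M'/ξⁿM'` by dévissage: `ξ` being regular,
`p • y ∈ ξ • N` first forces `y = ξ • z`, because `p` is regular on `M'/ξM'`, and then
`p • z ∈ N`. Since `M/Filⁿ M` embeds in `M'/ξⁿM'`, `p` is also regular on `M/Filⁿ M`; this
contains both claims, the second because `Filⁿ M ∩ pM = p Filⁿ M` whenever `p` is regular on
`M/Filⁿ M`.
-/

open Pointwise

theorem isSMulRegular_quotient_comap {R M M' : Type*} [Ring R] [AddCommGroup M]
    [Module R M] [AddCommGroup M'] [Module R M'] {p : R} {N : Submodule R M'} (f : M →ₗ[R] M')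
    (hN : IsSMulRegular (M' ⧸ N) p) : IsSMulRegular (M ⧸ N.comap f) p :=
  (isSMulRegular_quotient_iff_mem_of_smul_mem _ _).2 fun m hm =>
    mem_of_isSMulRegular_quotient_of_smul_mem hN (map_smul f p m ▸ hm)

section

variable {A M M' : Type*} [CommRing A] [AddCommGroup M] [Module A M]
  [AddCommGroup M'] [Module A M']

theorem isSMulRegular_quotient_smul {r p : A} {N : Submodule A M} (hr : IsSMulRegular M r)
    (hp : IsSMulRegular (QuotSMulTop r M) p) (hN : IsSMulRegular (M ⧸ N) p) :
    IsSMulRegular (M ⧸ r • N) p := by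
  refine (isSMulRegular_quotient_iff_mem_of_smul_mem _ _).2 fun y hy => ?_
  have hy_top : y ∈ r • (⊤ : Submodule A M) :=
    mem_of_isSMulRegular_quotient_of_smul_mem hp <|
      (smul_mono_right r le_top : r • N ≤ r • ⊤) hy
  obtain ⟨z, -, rfl⟩ := (Submodule.mem_smul_pointwise_iff_exists _ _ _).1 hy_top
  obtain ⟨n, hn, hrn⟩ := (Submodule.mem_smul_pointwise_iff_exists _ _ _).1 hy
  have hpz : p • z = n := hr ((smul_comm r p z).trans hrn.symm)
  have hz : z ∈ N := mem_of_isSMulRegular_quotient_of_smul_mem hN (hpz ▸ hn)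
  exact Submodule.smul_mem_pointwise_smul _ _ _ hz

theorem isSMulRegular_quotient_pow_smul_top {r p : A} (hr : IsSMulRegular M r)
    (hp : IsSMulRegular (QuotSMulTop r M) p) (n : ℕ) :
    IsSMulRegular (M ⧸ r ^ n • (⊤ : Submodule A M)) p := by
  induction n with
  | zero => exact (isSMulRegular_quotient_iff_mem_of_smul_mem _ _).2 fun y _ => by simp
  | succ n ih =>
    rw [pow_succ', mul_smul]
    exact isSMulRegular_quotient_smul hr hp ih

theorem inf_smul_eq_smul_of_isSMulRegular_quotient {p : A} {N L : Submodule A M}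
    (hN : IsSMulRegular (M ⧸ N) p) (hNL : N ≤ L) : N ⊓ p • L = p • N := by
  apply le_antisymm
  · calc
      N ⊓ p • L ≤ p • ⊤ ⊓ N := le_inf (inf_le_right.trans (smul_mono_right p le_top)) inf_le_left
      _ ≤ p • N := smul_top_inf_eq_smul_of_isSMulRegular_on_quot hN
  · exact le_inf (Submodule.smul_le_self_of_tower p N) (smul_mono_right p hNL)

/-- The saturated Nygaardian filtration `Filⁱ M = f⁻¹(ξⁱM')`: the preimage under `f` of the
`ξ`-adic filtration of `M'`, with `ξⁱM'` encoded as the pointwise product `ξ ^ i • ⊤`. -/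
def saturatedNygaardianFiltration (ξ : A) (f : M →ₗ[A] M') (i : ℕ) : Submodule A M :=
  (ξ ^ i • (⊤ : Submodule A M')).comap f

theorem mem_saturatedNygaardianFiltration {ξ : A} {f : M →ₗ[A] M'} {i : ℕ} {m : M} :
    m ∈ saturatedNygaardianFiltration ξ f i ↔ ∃ y : M', f m = ξ ^ i • y := by
  simp [saturatedNygaardianFiltration, Submodule.mem_smul_pointwise_iff_exists, eq_comm]

theorem saturatedNygaardianFiltration_antitone (ξ : A) (f : M →ₗ[A] M') :
    Antitone (saturatedNygaardianFiltration ξ f) := by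
  refine antitone_nat_of_succ_le fun i => Submodule.comap_mono ?_
  rw [pow_succ, mul_smul]
  exact smul_mono_right _ le_top

theorem isSMulRegular_quotient_saturatedNygaardianFiltration {ξ p : A}
    (hξ : IsSMulRegular M' ξ) (hp : IsSMulRegular (QuotSMulTop ξ M') p)
    (f : M →ₗ[A] M') (i : ℕ) :
    IsSMulRegular (M ⧸ saturatedNygaardianFiltration ξ f i) p :=
  isSMulRegular_quotient_comap f (isSMulRegular_quotient_pow_smul_top hξ hp i)

end

theorem saturated_nygaardian_filtration_mod_p_injective_general
    {A : Type*} [CommRing A] (ξ p : A)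
    {M M' : Type*} [AddCommGroup M] [Module A M] [AddCommGroup M'] [Module A M']
    (f : M →ₗ[A] M')
    (hreg : ∀ y : M', ξ • y = 0 → y = 0)
    (htf : ∀ y : M', (∃ z : M', p • y = ξ • z) → ∃ z : M', y = ξ • z)
    (Fil : ℕ → Submodule A M)
    (hFil : ∀ (i : ℕ) (m : M), m ∈ Fil i ↔ ∃ y : M', f m = ξ ^ i • y) :
    (∀ (i : ℕ) (m : M), p • m ∈ Fil i → m ∈ Fil i) ∧
    (∀ ⦃i j : ℕ⦄, i ≤ j → Fil j ⊓ p • Fil i = p • Fil j) := by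
  obtain rfl : Fil = saturatedNygaardianFiltration ξ f :=
    funext fun i => Submodule.ext fun m =>
      (hFil i m).trans mem_saturatedNygaardianFiltration.symm
  have hξ : IsSMulRegular M' ξ := isSMulRegular_iff_right_eq_zero_of_smul.2 hreg
  have hp : IsSMulRegular (QuotSMulTop ξ M') p :=
    (isSMulRegular_quotient_iff_mem_of_smul_mem _ _).2 <| by
      simpa [Submodule.mem_smul_pointwise_iff_exists, eq_comm] using htf
  have hquot := isSMulRegular_quotient_saturatedNygaardianFiltration hξ hp f
  exact ⟨fun i _ => mem_of_isSMulRegular_quotient_of_smul_mem (hquot i), fun i j hij =>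
    inf_smul_eq_smul_of_isSMulRegular_quotient (hquot j)
      (saturatedNygaardianFiltration_antitone ξ f hij)⟩

/-- Let `A` be a commutative ring, `ξ, p ∈ A`, and `f : M → M'` an `A`-linear map of
`A`-modules.  Assume `ξ` is a nonzerodivisor on `M'` and `M'/ξM'` has no `p`-torsion.
Define `Fil^i M := f⁻¹(ξ^i • M')`.  Then for every `i ≥ 1` (written as `i + 1`), every
`m ∈ Fil^i M` with `p • m ∈ Fil^{i+1} M` lies in `Fil^{i+1} M`; consequently
`Fil^{i+1} M ⊓ p • Fil^i M = p • Fil^{i+1} M`, i.e. the natural map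
`Fil^{i+1} M / p • Fil^{i+1} M → Fil^i M / p • Fil^i M` is injective. -/
theorem saturated_nygaardian_filtration_mod_p_injective
    {A : Type*} [CommRing A] (ξ p : A)
    {M M' : Type*} [AddCommGroup M] [Module A M] [AddCommGroup M'] [Module A M']
    (f : M →ₗ[A] M')
    (hreg : ∀ y : M', ξ • y = 0 → y = 0)
    (htf : ∀ y : M', (∃ z : M', p • y = ξ • z) → ∃ z : M', y = ξ • z)
    (Fil : ℕ → Submodule A M)
    (hFil : ∀ (i : ℕ) (m : M), m ∈ Fil i ↔ ∃ y : M', f m = ξ ^ i • y) :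
    (∀ (i : ℕ), ∀ m ∈ Fil i, p • m ∈ Fil (i + 1) → m ∈ Fil (i + 1)) ∧
    (∀ i : ℕ, Fil (i + 1) ⊓ p • Fil i = p • Fil (i + 1)) := by
  have h := saturated_nygaardian_filtration_mod_p_injective_general ξ p f hreg htf Fil hFil
  exact ⟨fun i m _ => h.1 (i + 1) m, fun i => h.2 i.le_succ⟩
end
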